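/- Every transcendental holomorphic self-map f of ℂ* can be written in the form f(z) = z^n · exp(g(z) + h(1/z)) for some integer n and non-constant entire functions g and h. In particular, f has no zeros and omits the value 0. -/

import Mathlib

open Complex Set Filter

/-!
Since `f ∘ exp` is entire without zeros, it has an entire logarithm `L`
(`exists_entire_log`). The function `L (w + 2πi) - L w` has derivative zero and takes values in
`2πiℤ`, so it equals `2πin` for one integer `n`, and `L w - n w` is `2πi`-periodic. It therefore
descends along `exp` to a holomorphic function `F` on `ℂ \ {0}` with `f z = z ^ n * exp (F z)`
(`exists_zpow_mul_exp`).

The Laurent decomposition `F z = g z + h z⁻¹` (`exists_laurent_split`) is obtained from Cauchy's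
formula in an annulus: `g` is the Cauchy integral of `F` over any circle enclosing the point, and
`F - g` is bounded near `∞`, being minus the Cauchy integral over the unit circle; so
`u ↦ (F - g) u⁻¹` has a removable singularity at `0`.

If `g` were constant, then `f z = z ^ n * u z` with `u` tending to a nonzero limit as `z → ∞`, so `f`
would have a limit in the Riemann sphere at `∞`; likewise at `0` for `h`
(`exists_tendsto_onePoint`).
-/

/-- A product `v ^ n * u` with `v → ∞` and `u` tending to a finite nonzero limit converges in the
Riemann sphere: to `∞`, to a finite nonzero value or to `0`, according to the sign of `n`. -/
lemma exists_tendsto_onePoint {α : Type*} {l : Filter α} {u v : α → ℂ} {a : ℂ} (ha : a ≠ 0)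
    (hu : Tendsto u l (nhds a)) (hv : Tendsto v l (Bornology.cobounded ℂ)) (n : ℤ) :
    ∃ b : OnePoint ℂ, Tendsto (fun z => OnePoint.some (v z ^ n * u z)) l (nhds b) := by
  rcases lt_trichotomy n 0 with hn | rfl | hn
  · obtain ⟨m, rfl⟩ : ∃ m : ℕ, n = -((m + 1 : ℕ) : ℤ) := ⟨(-n - 1).toNat, by omega⟩
    refine ⟨OnePoint.some 0, (OnePoint.continuous_coe.tendsto _).comp ?_⟩
    have h := ((tendsto_inv₀_cobounded.comp hv).pow (m + 1)).mul hu
    rw [zero_pow (by omega), zero_mul] at h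
    refine h.congr fun z => ?_
    rw [zpow_neg, zpow_natCast, ← inv_pow]
    rfl
  · exact ⟨OnePoint.some a, (OnePoint.continuous_coe.tendsto _).comp (by simpa using hu)⟩
  · obtain ⟨m, rfl⟩ : ∃ m : ℕ, n = ((m + 1 : ℕ) : ℤ) := ⟨(n - 1).toNat, by omega⟩
    refine ⟨OnePoint.infty, OnePoint.tendsto_coe_infty.comp ?_⟩
    rw [coclosedCompact_eq_cocompact, ← Metric.cobounded_eq_cocompact,
      ← tendsto_norm_atTop_iff_cobounded]
    have h1 := (tendsto_pow_atTop (n := m + 1) (by omega)).comp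
      (tendsto_norm_atTop_iff_cobounded.2 hv)
    have h := h1.atTop_mul_pos (norm_pos_iff.2 ha) hu.norm
    refine h.congr fun z => ?_
    simp only [Function.comp_apply, norm_mul, zpow_natCast, norm_pow]

/-- A zero-free entire function has an entire logarithm. -/
lemma exists_entire_log {E : ℂ → ℂ} (hE : Differentiable ℂ E) (h0 : ∀ z, E z ≠ 0) :
    ∃ L : ℂ → ℂ, (∀ z, HasDerivAt L (deriv E z / E z) z) ∧ ∀ z, exp (L z) = E z := by
  have hd : Differentiable ℂ (fun z => deriv E z / E z) := by
    have : Differentiable ℂ (deriv E) := fun z => (hE.analyticAt z).deriv.differentiableAt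
    exact this.div hE h0
  obtain ⟨L, hL0, hL⟩ := (hd.isExactOn_univ).with_val_at 0 (log (E 0))
  have hL' : ∀ z, HasDerivAt L (deriv E z / E z) z := fun z => hL z (mem_univ z)
  refine ⟨L, hL', fun z => ?_⟩
  have hq : ∀ w, HasDerivAt (fun z => exp (L z) / E z) 0 w := fun w => by
    have h := (hL' w).cexp.div (hE w).hasDerivAt (h0 w)
    refine h.congr_deriv ?_
    have := h0 w
    field_simp
    ring
  have hc := is_const_of_deriv_eq_zero (fun w => (hq w).differentiableAt)
    (fun w => (hq w).deriv) z 0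
  rw [hL0, exp_log (h0 0), div_self (h0 0)] at hc
  exact (div_eq_one_iff_eq (h0 z)).1 hc

/-- A holomorphic self-map of the punctured plane is a power times the exponential of a
holomorphic function; the exponent `n` is its winding number around `0`. -/
lemma exists_zpow_mul_exp {f : ℂ → ℂ} (hf : DifferentiableOn ℂ f {(0 : ℂ)}ᶜ)
    (hmaps : ∀ z : ℂ, z ≠ 0 → f z ≠ 0) :
    ∃ (n : ℤ) (F : ℂ → ℂ), DifferentiableOn ℂ F {(0 : ℂ)}ᶜ ∧
      ∀ z ≠ 0, f z = z ^ n * exp (F z) := by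
  have hE : Differentiable ℂ (fun w => f (exp w)) := fun w =>
    (hf.differentiableAt (isOpen_compl_singleton.mem_nhds (exp_ne_zero w))).comp w
      differentiable_exp.differentiableAt
  obtain ⟨E, hEdef⟩ : ∃ E : ℂ → ℂ, E = fun w => f (exp w) := ⟨_, rfl⟩
  rw [← hEdef] at hE
  obtain ⟨L, hL, hLe⟩ := exists_entire_log hE
    (fun w => by rw [hEdef]; exact hmaps _ (exp_ne_zero w))
  have hEp : ∀ w, E (w + 2 * Real.pi * I) = E w := fun w => by
    simp only [hEdef, exp_periodic w]
  have hdEp : ∀ w, deriv E (w + 2 * Real.pi * I) = deriv E w := fun w => by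
    rw [← deriv_comp_add_const]
    exact congrArg (fun G => deriv G w) (funext hEp)
  obtain ⟨n, hn⟩ : ∃ n : ℤ, L (0 + 2 * Real.pi * I) = L 0 + n * (2 * Real.pi * I) := by
    rw [← exp_eq_exp_iff_exists_int, hLe, hLe, hEp]
  have hq : ∀ w, HasDerivAt (fun w => L (w + 2 * Real.pi * I) - L w) 0 w := fun w => by
    refine (((hL (w + 2 * Real.pi * I)).comp_add_const _ _).sub (hL w)).congr_deriv ?_
    rw [hEp, hdEp, sub_self]
  have hLp : ∀ w, L (w + 2 * Real.pi * I) - L w = n * (2 * Real.pi * I) := fun w => by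
    have := is_const_of_deriv_eq_zero (fun w => (hq w).differentiableAt)
      (fun w => (hq w).deriv) w 0
    rw [this, hn]; ring
  set M : ℂ → ℂ := fun w => L w - n * w with hM
  have hMd : Differentiable ℂ M := fun w => by
    have := (hL w).differentiableAt
    fun_prop
  have hMp : Function.Periodic M (2 * Real.pi * I) := fun w => by
    simp only [hM]
    linear_combination hLp w
  have hMexp : ∀ a b, exp a = exp b → M a = M b := fun a b hab => by
    obtain ⟨m, rfl⟩ := exp_eq_exp_iff_exists_int.1 hab
    exact hMp.int_mul m b
  refine ⟨n, fun z => M (log z), fun z hz => ?_, fun z hz => ?_⟩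
  · rcases mem_slitPlane_or_neg_mem_slitPlane hz with h | h
    · exact ((hMd _).comp z (differentiableAt_log h)).differentiableWithinAt
    · -- On the branch cut of `log`, use the branch `log (-z) + πi` instead.
      have h1 : DifferentiableAt ℂ (fun z => M (log (-z) + Real.pi * I)) z :=
        (hMd _).comp z
          (((differentiableAt_log h).comp z differentiableAt_id.neg).add_const _)
      refine h1.differentiableWithinAt.congr (fun y hy => hMexp _ _ ?_) (hMexp _ _ ?_)
      · rw [exp_add, exp_log hy, exp_log (neg_ne_zero.2 hy), exp_pi_mul_I]; ring
      · rw [exp_add, exp_log hz, exp_log (neg_ne_zero.2 hz), exp_pi_mul_I]; ring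
  · have h1 : f z = exp (L (log z)) := by rw [hLe, hEdef]; simp only [exp_log hz]
    have h2 : L (log z) = n * log z + M (log z) := by simp only [hM]; ring
    rw [h1, h2, exp_add, exp_int_mul, exp_log hz]

/-- The Cauchy integral of `F` over the circle of radius `R` about `0`. -/
noncomputable def cauchyInt (F : ℂ → ℂ) (R : ℝ) (z : ℂ) : ℂ :=
  (2 * Real.pi * I : ℂ)⁻¹ • ∮ w in C(0, R), (w - z)⁻¹ • F w

lemma continuousOn_sphere_of_punctured {F : ℂ → ℂ} (hF : DifferentiableOn ℂ F {(0 : ℂ)}ᶜ) {R : ℝ}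
    (hR : 0 < R) : ContinuousOn F (Metric.sphere 0 R) :=
  hF.continuousOn.mono fun z hz => by
    rintro rfl
    simp at hz
    exact hR.ne hz

lemma differentiableOn_cauchyInt {F : ℂ → ℂ} (hF : DifferentiableOn ℂ F {(0 : ℂ)}ᶜ) {R : ℝ}
    (hR : 0 < R) : DifferentiableOn ℂ (cauchyInt F R) (Metric.ball 0 R) := by
  lift R to NNReal using hR.le
  have h := hasFPowerSeriesOn_cauchy_integral
    ((continuousOn_sphere_of_punctured hF hR).circleIntegrable R.coe_nonneg) (by exact_mod_cast hR)
  have := h.differentiableOn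
  rwa [Metric.eball_coe] at this

/-- Cauchy integrals over two circles agree at every point lying inside both of them. -/
lemma cauchyInt_eq {F : ℂ → ℂ} (hF : DifferentiableOn ℂ F {(0 : ℂ)}ᶜ) {r R : ℝ} (hr : 0 < r)
    (hrR : r ≤ R) {z : ℂ} (hz : ‖z‖ < r) : cauchyInt F R z = cauchyInt F r z := by
  have key : ∀ w : ℂ, r ≤ ‖w‖ → DifferentiableAt ℂ (fun w => (w - z)⁻¹ • F w) w := fun w hw => by
    have hw0 : w ≠ 0 := norm_pos_iff.1 (hr.trans_le hw)
    have hwz : w - z ≠ 0 := sub_ne_zero.2 (by rintro rfl; linarith)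
    have := hF.differentiableAt (isOpen_compl_singleton.mem_nhds hw0)
    exact ((differentiableAt_id.sub_const z).inv hwz).smul this
  unfold cauchyInt
  rw [circleIntegral_eq_of_differentiable_on_annulus_off_countable hr hrR countable_empty]
  · intro w hw
    exact (key w (by simpa using hw.2)).continuousAt.continuousWithinAt
  · intro w hw
    exact key w (by have := hw.1.2; simp at this; exact this.le)

/-- Cauchy's integral formula in an annulus. -/
lemma cauchyInt_sub_cauchyInt {F : ℂ → ℂ} (hF : DifferentiableOn ℂ F {(0 : ℂ)}ᶜ) {r R : ℝ}
    (hr : 0 < r) {z : ℂ} (hz : r < ‖z‖) (hz' : ‖z‖ < R) :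
    cauchyInt F R z - cauchyInt F r z = F z := by
  have hz0 : z ≠ 0 := norm_pos_iff.1 (hr.trans hz)
  have hdiff : ∀ w : ℂ, w ≠ 0 → DifferentiableAt ℂ F w := fun w hw =>
    hF.differentiableAt (isOpen_compl_singleton.mem_nhds hw)
  have hcont : ContinuousOn (dslope F z) {(0 : ℂ)}ᶜ :=
    (continuousOn_dslope (isOpen_compl_singleton.mem_nhds hz0)).2 ⟨hF.continuousOn, hdiff z hz0⟩
  -- The difference quotient is holomorphic in the annulus, also at `z`.
  have h1 := circleIntegral_eq_of_differentiable_on_annulus_off_countable (f := dslope F z)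
    (c := 0) hr (hz.trans hz').le (countable_singleton z)
    (hcont.mono fun w hw => by
      rintro rfl
      simp at hw
      linarith)
    (fun w hw => by
      refine (differentiableAt_dslope_of_ne hw.2).2 (hdiff w ?_)
      rintro rfl
      have := hw.1.2
      simp at this
      linarith)
  have h2 : ∀ ρ : ℝ, 0 < ρ → ρ ≠ ‖z‖ → (∮ w in C(0, ρ), dslope F z w) =
      (∮ w in C(0, ρ), (w - z)⁻¹ • F w) - (∮ w in C(0, ρ), (w - z)⁻¹) * F z := by
    intro ρ hρ hne
    have hzs : ∀ w ∈ Metric.sphere (0 : ℂ) ρ, w - z ≠ 0 := fun w hw => by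
      refine sub_ne_zero.2 ?_
      rintro rfl
      simp at hw
      exact hne hw.symm
    have hi : ContinuousOn (fun w : ℂ => (w - z)⁻¹) (Metric.sphere 0 ρ) :=
      (continuousOn_id.sub continuousOn_const).inv₀ hzs
    have hF' := continuousOn_sphere_of_punctured hF hρ
    have e : EqOn (dslope F z) (fun w => (w - z)⁻¹ • F w - (w - z)⁻¹ • F z)
        (Metric.sphere 0 ρ) := fun w hw => by
      rw [dslope_of_ne _ (sub_ne_zero.1 (hzs w hw)), slope_def_module, smul_sub]
    rw [circleIntegral.integral_congr hρ.le e, circleIntegral.integral_sub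
      (f := fun w => (w - z)⁻¹ • F w) (g := fun w => (w - z)⁻¹ • F z) ((hi.smul hF').circleIntegrable hρ.le)
      ((hi.smul continuousOn_const).circleIntegrable hρ.le),
      circleIntegral.integral_smul_const, smul_eq_mul]
  have h3 : (∮ w in C(0, R), (w - z)⁻¹) = 2 * Real.pi * I :=
    circleIntegral.integral_sub_inv_of_mem_ball (by simpa using hz')
  have h4 : (∮ w in C(0, r), (w - z)⁻¹) = 0 := by
    refine circleIntegral_eq_zero_of_differentiable_on_off_countable hr.le countable_empty ?_ ?_
    · refine (continuousOn_id.sub continuousOn_const).inv₀ fun w hw => sub_ne_zero.2 ?_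
      rintro rfl
      simp only [Metric.mem_closedBall, dist_zero_right] at hw
      exact absurd hz hw.not_gt
    · intro w hw
      refine (differentiableAt_id.sub_const z).inv (sub_ne_zero.2 ?_)
      rintro rfl
      have := hw.1
      simp only [Metric.mem_ball, dist_zero_right] at this
      exact absurd hz this.not_gt
  rw [h2 R (by linarith) hz'.ne', h2 r hr hz.ne, h3, h4] at h1
  have hpi : (2 * Real.pi * I : ℂ) ≠ 0 := two_pi_I_ne_zero
  unfold cauchyInt
  rw [← smul_sub, smul_eq_mul, inv_mul_eq_iff_eq_mul₀ hpi]
  linear_combination h1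

/-- The Laurent decomposition of a function holomorphic in the punctured plane. -/
lemma exists_laurent_split {F : ℂ → ℂ} (hF : DifferentiableOn ℂ F {(0 : ℂ)}ᶜ) :
    ∃ g h : ℂ → ℂ, Differentiable ℂ g ∧ Differentiable ℂ h ∧ ∀ z ≠ 0, F z = g z + h z⁻¹ := by
  set g : ℂ → ℂ := fun z => cauchyInt F (‖z‖ + 1) z with hg
  have hgR : ∀ R : ℝ, ∀ z : ℂ, ‖z‖ < R → g z = cauchyInt F R z := by
    intro R z hz
    have h0 := norm_nonneg z
    rcases le_total R (‖z‖ + 1) with h | h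
    · exact cauchyInt_eq hF (by linarith) h hz
    · exact (cauchyInt_eq hF (by linarith) h (by linarith)).symm
  have hgd : Differentiable ℂ g := fun z => by
    have h0 := norm_nonneg z
    have hmem : Metric.ball (0 : ℂ) (‖z‖ + 1) ∈ nhds z :=
      Metric.isOpen_ball.mem_nhds (by simp)
    have h1 := (differentiableOn_cauchyInt hF (R := ‖z‖ + 1) (by linarith)).differentiableAt hmem
    refine h1.congr_of_eventuallyEq ?_
    filter_upwards [hmem] with w hw
    exact hgR _ _ (by simpa using hw)
  set k : ℂ → ℂ := fun u => F u⁻¹ - g u⁻¹ with hk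
  have hkd : DifferentiableOn ℂ k {(0 : ℂ)}ᶜ := fun u hu => by
    have hF' := hF.differentiableAt (isOpen_compl_singleton.mem_nhds (inv_ne_zero hu))
    have hi := differentiableAt_inv (𝕜 := ℂ) hu
    exact ((hF'.comp u hi).sub ((hgd _).comp u hi)).differentiableWithinAt
  obtain ⟨C, hC⟩ := (isCompact_sphere (0 : ℂ) 1).exists_bound_of_continuousOn
    (continuousOn_sphere_of_punctured hF one_pos)
  have hbound : ∀ u ∈ Metric.ball (0 : ℂ) (1 / 2) \ {0}, ‖k u‖ ≤ C := by
    rintro u ⟨hu, hu0⟩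
    have hu0 : u ≠ 0 := hu0
    have hu' : ‖u‖ < 1 / 2 := by simpa using hu
    have hn : 2 < ‖u⁻¹‖ := by
      rw [norm_inv, lt_inv_comm₀ two_pos (norm_pos_iff.2 hu0)]
      simpa using hu'
    have e : k u = -cauchyInt F 1 u⁻¹ := by
      have := cauchyInt_sub_cauchyInt hF (r := 1) (R := ‖u⁻¹‖ + 1) one_pos (z := u⁻¹)
        (by linarith) (by linarith)
      simp only [hk, hg]
      linear_combination -this
    rw [e, norm_neg]
    have := circleIntegral.norm_two_pi_i_inv_smul_integral_le_of_norm_le_const (c := 0) (R := 1)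
      (C := C) (f := fun w => (w - u⁻¹)⁻¹ • F w) zero_le_one (fun w hw => by
        have hw1 : ‖w‖ = 1 := by simpa using hw
        have h1 : 1 ≤ ‖w - u⁻¹‖ := by
          have := norm_sub_norm_le u⁻¹ w
          rw [norm_sub_rev] at this
          linarith
        rw [norm_smul, norm_inv]
        calc ‖w - u⁻¹‖⁻¹ * ‖F w‖ ≤ 1 * ‖F w‖ :=
              mul_le_mul_of_nonneg_right (inv_le_one_of_one_le₀ h1) (norm_nonneg _)
          _ ≤ C := by simpa using hC w hw)
    simpa [cauchyInt] using this
  have hball := differentiableOn_update_limUnder_of_bddAbove (f := k) (c := 0)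
    (Metric.ball_mem_nhds (0 : ℂ) (by norm_num : (0 : ℝ) < 1 / 2))
    (hkd.mono fun u hu => hu.2) ⟨C, by rintro _ ⟨u, hu, rfl⟩; exact hbound u hu⟩
  refine ⟨g, Function.update k 0 (limUnder (nhdsWithin 0 {0}ᶜ) k), hgd, fun u => ?_,
    fun z hz => ?_⟩
  · rcases eq_or_ne u 0 with rfl | hu
    · exact hball.differentiableAt (Metric.ball_mem_nhds _ (by norm_num))
    · have hmem := isOpen_compl_singleton.mem_nhds hu
      refine (hkd.differentiableAt hmem).congr_of_eventuallyEq ?_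
      filter_upwards [hmem] with w hw
      exact Function.update_of_ne hw _ _
  · rw [Function.update_of_ne (inv_ne_zero hz)]
    simp [hk]

/-- Every transcendental holomorphic self-map of `ℂ* = ℂ \ {0}` (i.e. one having
essential singularities at both `0` and `∞`, formalised as having no limit in the
Riemann sphere `OnePoint ℂ` at either point) can be written as
`f(z) = z^n · exp(g(z) + h(1/z))` with `n ∈ ℤ` and `g, h` non-constant entire
functions; in particular `f` omits the value `0`. -/
theorem stmt5 (f : ℂ → ℂ)
    (hf : DifferentiableOn ℂ f {(0 : ℂ)}ᶜ)
    (hmaps : ∀ z : ℂ, z ≠ 0 → f z ≠ 0)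
    (h0 : ¬ ∃ l : OnePoint ℂ, Tendsto (fun z : ℂ => OnePoint.some (f z))
      (nhdsWithin 0 {(0 : ℂ)}ᶜ) (nhds l))
    (hinf : ¬ ∃ l : OnePoint ℂ, Tendsto (fun z : ℂ => OnePoint.some (f z))
      (Bornology.cobounded ℂ) (nhds l)) :
    ∃ (n : ℤ) (g h : ℂ → ℂ), Differentiable ℂ g ∧ Differentiable ℂ h ∧
      (¬ ∃ c : ℂ, ∀ z, g z = c) ∧ (¬ ∃ c : ℂ, ∀ z, h z = c) ∧
      ∀ z : ℂ, z ≠ 0 → f z = z ^ n * Complex.exp (g z + h z⁻¹) ∧ f z ≠ 0 := by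
  obtain ⟨n, F, hF, hfF⟩ := exists_zpow_mul_exp hf hmaps
  obtain ⟨g, h, hg, hh, hsplit⟩ := exists_laurent_split hF
  have hrep : ∀ z : ℂ, z ≠ 0 → f z = z ^ n * exp (g z + h z⁻¹) := fun z hz => by
    rw [hfF z hz, hsplit z hz]
  refine ⟨n, g, h, hg, hh, ?_, ?_, fun z hz => ⟨hrep z hz, hmaps z hz⟩⟩
  · rintro ⟨c, hc⟩
    apply hinf
    have hu : Tendsto (fun z : ℂ => exp (c + h z⁻¹)) (Bornology.cobounded ℂ)
        (nhds (exp (c + h 0))) :=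
      (continuous_exp.comp (continuous_const.add hh.continuous)).continuousAt.tendsto.comp
        tendsto_inv₀_cobounded
    obtain ⟨b, hb⟩ := exists_tendsto_onePoint (exp_ne_zero _) hu tendsto_id n
    refine ⟨b, hb.congr' ?_⟩
    filter_upwards [Bornology.eventually_ne_cobounded (0 : ℂ)] with z hz
    rw [hrep z hz, hc]
    rfl
  · rintro ⟨c, hc⟩
    apply h0
    have hu : Tendsto (fun z : ℂ => exp (g z + c)) (nhdsWithin 0 {(0 : ℂ)}ᶜ)
        (nhds (exp (g 0 + c))) :=
      (continuous_exp.comp (hg.continuous.add continuous_const)).continuousAt.tendsto.mono_left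
        nhdsWithin_le_nhds
    -- Near `0` the quantity tending to `∞` is `z⁻¹`, whence the exponent `-n`.
    obtain ⟨b, hb⟩ := exists_tendsto_onePoint (exp_ne_zero _) hu
      (tendsto_inv₀_nhdsNE_zero (α := ℂ)) (-n)
    refine ⟨b, hb.congr' ?_⟩
    filter_upwards [self_mem_nhdsWithin] with z hz
    rw [hrep z hz, hc, inv_zpow, zpow_neg, inv_inv]
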